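/- arXiv:math/9812106 — 2 statements merged into one kernel-verified Lean document; each statement's English description precedes it below -/
import Mathlib

section
/- Key cancellation lemma: let B' be the crystal of a finite direct sum of irreducible integrable highest weight modules and B ⊆ B' a subset closed under all e_i, generating B', and such that for b ∈ B and i ∈ I with ε_i(b) > 0 the entire i-string of b in B' lies in B. Fix dominant regular Λ+ρ, and let S be the set of pairs (w,b) ∈ W × B with wt(b) = w^{-1}(Λ+ρ) - ρ. If (w,b) ∈ S and b is a highest weight vector, then w = 1 and wt(b) = Λ. Moreover, for each i ∈ I, the map Φ_i(w,b) = (w r_i, s_i e_i(b)) is a well-defined sign-reversing involution on the subset S_i = {(w,b) ∈ S \ {(1, u_Λ)} : ε_i(b) > 0}; in particular wt(s_i e_i(b)) = (w r_i)^{-1}(Λ+ρ) - ρ. -/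
/-!
For the first claim, if `b` is a highest weight vector of weight `w⁻¹(Λ + ρ) - ρ`, then
`wt b + ρ` and `Λ + ρ` are dominant weights in one `W`-orbit, so they coincide, and regularity
forces `w = 1`.

For the second claim, everything takes place inside one `i`-string. An edge `e_i b = b'`
changes `ε_i` and `φ_i` by one in opposite directions, so comparing
`φ_i - ε_i = ⟨α_i^∨, wt⟩` at both ends gives `⟨α_i^∨, α_i⟩ = 2` as soon as the string has an edge
(`Crystal` does not record this). Consequently `r_i` acts as an involution, and `s_i` acts on
weights by `r_i` (`Crystal.wt_s`). Since `s_i` flips the `i`-string, `e_i b = b'` implies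
`e_i (s_i b') = s_i b` (`Crystal.e_s`); as `s_i` is an involution (`Crystal.s_s`), applying
`s_i e_i` twice returns `b`.
-/

/-- Iterate a partial map `m` times. -/
def pIter {B : Type*} (g : B → Option B) : ℕ → B → Option B
  | 0, b => some b
  | n+1, b => (g b).bind (pIter g n)

/-- A `P`-weighted `I`-crystal: partial raising/lowering operators `e i`, `f i`
which are mutually inverse where defined, a weight function, finite string lengths
`phi i b` (maximal `m` with `f i` applicable `m` times) and `eps i b`
(maximal `m` with `e i` applicable `m` times), satisfying
`wt (f i b) = wt b - α i` and `phi i b - eps i b = ⟨α_i^∨, wt b⟩`. -/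
structure Crystal (I P : Type*) [AddCommGroup P] where
  B : Type*
  α : I → P
  coroot : I → P →+ ℤ
  e : I → B → Option B
  f : I → B → Option B
  wt : B → P
  phi : I → B → ℕ
  eps : I → B → ℕ
  ef_inv : ∀ i b b', f i b = some b' ↔ e i b' = some b
  wt_f : ∀ i b b', f i b = some b' → wt b' = wt b - α i
  phi_max : ∀ i b, (pIter (f i) (phi i b) b).isSome ∧ pIter (f i) (phi i b + 1) b = none
  eps_max : ∀ i b, (pIter (e i) (eps i b) b).isSome ∧ pIter (e i) (eps i b + 1) b = none
  string_eq : ∀ i b, (phi i b : ℤ) - eps i b = coroot i (wt b)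

/-- The crystal reflection operator `s_i`:
`s_i(b) = f_i^{φ_i(b)-ε_i(b)}(b)` if `φ_i(b) ≥ ε_i(b)` and
`s_i(b) = e_i^{ε_i(b)-φ_i(b)}(b)` otherwise (in particular `s_i(b) = b` when
`φ_i(b) = ε_i(b)`). -/
def Crystal.s {I P : Type*} [AddCommGroup P] (C : Crystal I P) (i : I) (b : C.B) : C.B :=
  if C.eps i b ≤ C.phi i b then (pIter (C.f i) (C.phi i b - C.eps i b) b).getD b
  else (pIter (C.e i) (C.eps i b - C.phi i b) b).getD b

theorem pIter_add {B : Type*} (g : B → Option B) (m n : ℕ) (b : B) :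
    pIter g (m + n) b = (pIter g m b).bind (pIter g n) := by
  induction m generalizing b with
  | zero => simp [pIter]
  | succ m ih =>
    rw [Nat.add_right_comm]
    cases h : g b with
    | none => simp [pIter, h]
    | some c => simp [pIter, h, ih]

theorem pIter_one {B : Type*} (g : B → Option B) (b : B) : pIter g 1 b = g b := by
  cases h : g b <;> simp [pIter, h]

theorem pIter_none_of_le {B : Type*} {g : B → Option B} {m n : ℕ} {b : B} (hmn : m ≤ n)
    (h : pIter g m b = none) : pIter g n b = none := by
  obtain ⟨k, rfl⟩ := Nat.exists_eq_add_of_le hmn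
  simp [pIter_add, h]

/-- The number of times a partial map can be iterated from `b` is determined by `b`. -/
theorem pIter_max_unique {B : Type*} {g : B → Option B} {m n : ℕ} {b : B}
    (hm : (pIter g m b).isSome ∧ pIter g (m + 1) b = none)
    (hn : (pIter g n b).isSome ∧ pIter g (n + 1) b = none) : m = n := by
  rcases lt_trichotomy m n with h | h | h
  · simp [pIter_none_of_le h hm.2] at hn
  · exact h
  · simp [pIter_none_of_le h hn.2] at hm

namespace Crystal

variable {I P : Type*} [AddCommGroup P] (C : Crystal I P)

theorem eps_of_e {i : I} {b b' : C.B} (h : C.e i b = some b') :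
    C.eps i b = C.eps i b' + 1 := by
  refine pIter_max_unique (C.eps_max i b) ?_
  simpa [pIter, h] using C.eps_max i b'

theorem phi_of_e {i : I} {b b' : C.B} (h : C.e i b = some b') :
    C.phi i b' = C.phi i b + 1 := by
  refine pIter_max_unique (C.phi_max i b') ?_
  simpa [pIter, (C.ef_inv i b' b).2 h] using C.phi_max i b

theorem wt_e {i : I} {b b' : C.B} (h : C.e i b = some b') :
    C.wt b' = C.wt b + C.α i := by
  rw [C.wt_f i b' b ((C.ef_inv i b' b).2 h), sub_add_cancel]

/-- An edge of color `i` forces `⟨α_i^∨, α_i⟩ = 2`. -/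
theorem coroot_root {i : I} {b b' : C.B} (h : C.e i b = some b') :
    C.coroot i (C.α i) = 2 := by
  have h1 := C.string_eq i b
  have h2 := C.string_eq i b'
  rw [C.wt_e h, map_add, ← h1, C.phi_of_e h] at h2
  rw [C.eps_of_e h] at h2
  push_cast at h2
  omega

/-- Iterates of `e_i` and `f_i` are inverse partial maps. -/
theorem pIter_f_iff {i : I} {m : ℕ} {x y : C.B} :
    pIter (C.f i) m x = some y ↔ pIter (C.e i) m y = some x := by
  induction m generalizing x with
  | zero => simp [pIter, eq_comm]
  | succ m ih =>
    rw [pIter_add (C.e i) m 1]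
    simp [pIter, Option.bind_eq_some_iff, ih, C.ef_inv, and_comm]

theorem eps_of_pIter_e {i : I} {m : ℕ} {x y : C.B} (h : pIter (C.e i) m x = some y) :
    C.eps i x = C.eps i y + m ∧ C.phi i y = C.phi i x + m ∧
      C.wt y = C.wt x + m • C.α i := by
  induction m generalizing x with
  | zero =>
    obtain rfl : x = y := by simpa [pIter] using h
    simp
  | succ m ih =>
    obtain ⟨z, hz, hzy⟩ := Option.bind_eq_some_iff.1 h
    obtain ⟨h1, h2, h3⟩ := ih hzy
    refine ⟨?_, ?_, ?_⟩
    · rw [C.eps_of_e hz, h1, add_assoc]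
    · rw [h2, C.phi_of_e hz]; omega
    · rw [h3, C.wt_e hz, succ_nsmul]; abel

theorem s_of_f {i : I} {b : C.B} {k : ℕ} (h : C.phi i b = C.eps i b + k) :
    pIter (C.f i) k b = some (C.s i b) := by
  cases hk : pIter (C.f i) k b with
  | none =>
    have := (C.phi_max i b).1
    simp [pIter_none_of_le (by omega : k ≤ C.phi i b) hk] at this
  | some c => simp [Crystal.s, h, hk]

theorem s_of_e {i : I} {b : C.B} {k : ℕ} (h : C.eps i b = C.phi i b + k) :
    pIter (C.e i) k b = some (C.s i b) := by
  cases hk : pIter (C.e i) k b with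
  | none =>
    have := (C.eps_max i b).1
    simp [pIter_none_of_le (by omega : k ≤ C.eps i b) hk] at this
  | some c =>
    rcases Nat.eq_zero_or_pos k with rfl | hpos
    -- At the middle of the string `s` is defined through `f`, applied zero times.
    · simp_all [Crystal.s, pIter]
    · have : ¬ C.eps i b ≤ C.phi i b := by omega
      simp [Crystal.s, h, hk, hpos.ne']

theorem s_cases (i : I) (b : C.B) :
    (∃ k, C.phi i b = C.eps i b + k ∧ pIter (C.e i) k (C.s i b) = some b) ∨
    (∃ k, C.eps i b = C.phi i b + k ∧ pIter (C.e i) k b = some (C.s i b)) := by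
  rcases le_total (C.eps i b) (C.phi i b) with h | h <;>
    obtain ⟨k, hk⟩ := Nat.exists_eq_add_of_le h
  · exact .inl ⟨k, hk, C.pIter_f_iff.1 (C.s_of_f hk)⟩
  · exact .inr ⟨k, hk, C.s_of_e hk⟩

theorem eps_s (i : I) (b : C.B) : C.eps i (C.s i b) = C.phi i b := by
  rcases C.s_cases i b with ⟨k, hk, h⟩ | ⟨k, hk, h⟩ <;>
    have := C.eps_of_pIter_e h <;> omega

theorem phi_s (i : I) (b : C.B) : C.phi i (C.s i b) = C.eps i b := by
  rcases C.s_cases i b with ⟨k, hk, h⟩ | ⟨k, hk, h⟩ <;>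
    have := C.eps_of_pIter_e h <;> omega

theorem wt_s (i : I) (b : C.B) :
    C.wt (C.s i b) = C.wt b - C.coroot i (C.wt b) • C.α i := by
  rcases C.s_cases i b with ⟨k, hk, h⟩ | ⟨k, hk, h⟩
  · rw [← C.string_eq, hk, (C.eps_of_pIter_e h).2.2]
    simp
  · rw [← C.string_eq, hk, (C.eps_of_pIter_e h).2.2]
    simp

theorem s_s (i : I) (b : C.B) : C.s i (C.s i b) = b := by
  rcases C.s_cases i b with ⟨k, hk, h⟩ | ⟨k, hk, h⟩
  · have := C.s_of_e (i := i) (b := C.s i b) (k := k) (by rw [eps_s, phi_s, hk])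
    exact Option.some.inj (this.symm.trans h)
  · have := C.s_of_f (i := i) (b := C.s i b) (k := k) (by rw [eps_s, phi_s, hk])
    exact Option.some.inj (this.symm.trans (C.pIter_f_iff.2 h))

/-- The reflection reverses edges: if `e_i b = b'` then `e_i (s_i b') = s_i b`. -/
theorem e_s {i : I} {b b' : C.B} (h : C.e i b = some b') :
    C.e i (C.s i b') = some (C.s i b) := by
  have he := C.eps_of_e h
  have hp := C.phi_of_e h
  have hf := (C.ef_inv i b' b).2 h
  rcases le_or_gt (C.eps i b) (C.phi i b) with hle | hlt
  · -- `b` lies in the upper half, and `f^(k+2) b' = f (f^k b)`.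
    obtain ⟨k, hk⟩ := Nat.exists_eq_add_of_le hle
    have h1 := C.s_of_f hk
    have h2 := C.s_of_f (i := i) (b := b') (k := (k + 1) + 1) (by omega)
    rw [pIter, hf, Option.bind_some, pIter_add, h1, Option.bind_some, pIter_one] at h2
    exact (C.ef_inv _ _ _).1 h2
  · obtain ⟨k, hk⟩ := Nat.exists_eq_add_of_lt hlt
    have h1 := C.s_of_e (i := i) (b := b) (k := k + 1) (by omega)
    rw [pIter, h, Option.bind_some] at h1
    cases k with
    | zero =>
      -- The edge is the middle one of the string, and `s` swaps its two ends.
      have h2 := C.s_of_f (i := i) (b := b') (k := 1) (by omega)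
      rw [pIter_one, hf] at h2
      rw [← Option.some.inj h2, h, ← h1, pIter]
    | succ k =>
      have h2 := C.s_of_e (i := i) (b := b') (k := k) (by omega)
      rwa [pIter_add, h2, Option.bind_some, pIter_one] at h1

/-- If `e_i b = b'`, then `s_i b'` is reached from `b` by iterating `e_i` or `f_i`. -/
theorem s_mem_string {i : I} {b b' : C.B} (h : C.e i b = some b') :
    ∃ m, pIter (C.e i) m b = some (C.s i b') ∨ pIter (C.f i) m b = some (C.s i b') := by
  rcases le_or_gt (C.phi i b') (C.eps i b') with hle | hlt
  · obtain ⟨k, hk⟩ := Nat.exists_eq_add_of_le hle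
    exact ⟨k + 1, .inl (by rw [pIter, h, Option.bind_some, C.s_of_e hk])⟩
  · obtain ⟨k, hk⟩ := Nat.exists_eq_add_of_lt hlt
    have h1 := C.s_of_f (i := i) (b := b') (k := k + 1) (by omega)
    rw [pIter, (C.ef_inv i b' b).2 h, Option.bind_some] at h1
    exact ⟨k, .inr h1⟩

end Crystal

/-- key cancellation lemma.  `C` is the crystal `B'` of a finite
direct sum of irreducible integrable highest weight modules (abstracted by:
highest weight vectors have dominant shifted weight, dominant weights are unique
in their `W`-orbit), `Bset ⊆ B'` is closed under all `e_i`, generates `B'`, and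
contains the whole `i`-string of any of its elements admitting `e_i`.  `G` is the
Weyl group with simple reflections `r i` of sign `-1` acting by
`r_i β = β - ⟨α_i^∨,β⟩α_i`, `ρ` the Weyl vector, and `Λ + ρ` dominant regular.
Let `S` be the set of pairs `(w,b) ∈ W × Bset` with `wt b = w⁻¹(Λ+ρ) - ρ`.  Then:
(1) if `(w,b) ∈ S` and `b` is a highest weight vector then `w = 1` and
`wt b = Λ`; (2) for each `i`, `Φ_i(w,b) = (w r_i, s_i e_i(b))` is a well-defined
sign-reversing involution on `S_i = {(w,b) ∈ S : ε_i(b) > 0}`; in particular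
`s_i e_i(b) ∈ Bset`, `wt(s_i e_i(b)) = (w r_i)⁻¹(Λ+ρ) - ρ`,
`ε_i(s_i e_i(b)) > 0`, applying `Φ_i` twice gives back `b`, and
`sign(w r_i) = -sign(w)`. -/
theorem key_cancellation_lemma
    {I P : Type*} [AddCommGroup P] (C : Crystal I P)
    {G : Type*} [Group G] [MulAction G P]
    (sign : G →* ℤˣ) (r : I → G)
    (hr_act : ∀ (i : I) (β : P), r i • β = β - (C.coroot i β) • C.α i)
    (hr_sign : ∀ i, sign (r i) = -1)
    (ρ : P) (hρ : ∀ i, C.coroot i ρ = 1)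
    (dominant : P → Prop)
    (hdom_unique : ∀ μ ν : P, dominant μ → dominant ν → (∃ w : G, w • μ = ν) → μ = ν)
    (hdom_hw : ∀ b : C.B, (∀ i, C.e i b = none) → dominant (C.wt b + ρ))
    (Λ : P) (hΛdom : dominant (Λ + ρ))
    (hreg : ∀ w : G, w ≠ 1 → w • (Λ + ρ) ≠ Λ + ρ)
    (Bset : Set C.B)
    (hclosed : ∀ (i : I), ∀ b ∈ Bset, ∀ b', C.e i b = some b' → b' ∈ Bset)
    (hgen : ∀ x : C.B, ∃ b ∈ Bset,
      Relation.ReflTransGen (fun y z => ∃ i, C.f i y = some z) b x)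
    (hstring : ∀ (i : I), ∀ b ∈ Bset, 0 < C.eps i b →
      (∀ m x, pIter (C.e i) m b = some x → x ∈ Bset) ∧
      (∀ m x, pIter (C.f i) m b = some x → x ∈ Bset)) :
    (∀ (w : G) (b : C.B), b ∈ Bset → C.wt b = w⁻¹ • (Λ + ρ) - ρ →
        (∀ i, C.e i b = none) → w = 1 ∧ C.wt b = Λ)
    ∧ (∀ (i : I) (w : G) (b : C.B), b ∈ Bset → C.wt b = w⁻¹ • (Λ + ρ) - ρ →
        ∀ b', C.e i b = some b' →
          C.s i b' ∈ Bset
          ∧ C.wt (C.s i b') = (w * r i)⁻¹ • (Λ + ρ) - ρ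
          ∧ 0 < C.eps i (C.s i b')
          ∧ (∀ b'', C.e i (C.s i b') = some b'' → C.s i b'' = b)
          ∧ sign (w * r i) = - sign w) := by
  refine ⟨fun w b hb hwt hhw => ?_, fun i w b hb hwt b' hb' => ⟨?_, ?_, ?_, ?_, ?_⟩⟩
  · have hd := hdom_hw b hhw
    have hsum : C.wt b + ρ = w⁻¹ • (Λ + ρ) := by rw [hwt, sub_add_cancel]
    have heq : C.wt b + ρ = Λ + ρ :=
      hdom_unique _ _ hd hΛdom ⟨w, by rw [hsum, smul_inv_smul]⟩
    refine ⟨?_, add_right_cancel heq⟩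
    by_contra hw
    exact hreg w⁻¹ (inv_ne_one.2 hw) (hsum.symm.trans heq)
  · have hpos : 0 < C.eps i b := by rw [C.eps_of_e hb']; omega
    obtain ⟨m, hm | hm⟩ := C.s_mem_string hb'
    · exact (hstring i b hb hpos).1 m _ hm
    · exact (hstring i b hb hpos).2 m _ hm
  · have h2 := C.coroot_root hb'
    have hinv : ∀ β : P, (r i)⁻¹ • β = r i • β := fun β => by
      rw [inv_smul_eq_iff, hr_act, hr_act, map_sub, map_zsmul, h2]
      simp only [smul_eq_mul]
      module
    have hsum : w⁻¹ • (Λ + ρ) = C.wt b + ρ := by rw [hwt, sub_add_cancel]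
    rw [mul_inv_rev, mul_smul, hsum, hinv, hr_act, C.wt_s, C.wt_e hb', map_add, map_add, h2, hρ]
    module
  · rw [C.eps_s, C.phi_of_e hb']; omega
  · intro b'' hb''
    rw [← Option.some.inj ((C.e_s hb').symm.trans hb''), C.s_s]
  · rw [map_mul, hr_sign, mul_neg_one]
end

section
/- Energy raises correctly under e₀: let B = B_L ⊗ ... ⊗ B₁ be a tensor product of crystals of finite-dimensional modules with all pairwise tensor products connected, and E_B(b) = Σ_{1≤i<j≤L} H_{j,i}(b_j^{(i+1)} ⊗ b_i) the energy function. If i ≠ 0 and e_i(b) is defined then E_B(e_i(b)) = E_B(b). If i = 0 and every image b' of b under compositions of local isomorphisms satisfies e₀(b') = b'_L ⊗ ... ⊗ e₀(b'_k) ⊗ ... ⊗ b'_1 with k ≠ 1, then E_B(e₀(b)) = E_B(b) - 1. -/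
open scoped Classical

section Energy

variable {I P : Type*} [AddCommGroup P] (C : Crystal I P)

/-- `φ_i` of a tensor product of crystal elements (head of the list is the
leftmost factor; the empty list is the trivial factor). -/
def phiList (i : I) : List C.B → ℕ
  | [] => 0
  | x :: l => C.phi i x + (phiList i l - C.eps i x)

/-- `ε_i` of a tensor product. -/
def epsList (i : I) : List C.B → ℕ
  | [] => 0
  | x :: l => epsList i l + (C.eps i x - phiList C i l)

/-- `e_i` on a tensor product: acts on the right part if its `φ` is at least the
`ε` of the leftmost factor, else on the leftmost factor. -/
def eList (i : I) : List C.B → Option (List C.B)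
  | [] => none
  | x :: l =>
    if C.eps i x ≤ phiList C i l then (eList i l).map (x :: ·)
    else (C.e i x).map (· :: l)

/-- `e_i` on a pair `b₂ ⊗ b₁`. -/
def ePair (i : I) (p : C.B × C.B) : Option (C.B × C.B) :=
  match eList C i [p.1, p.2] with
  | some [a, b] => some (a, b)
  | _ => none

/-- Moving a factor rightward through a list by successive local isomorphisms
`σ : B_j ⊗ B_i → B_i ⊗ B_j`, `x ⊗ y ↦ y' ⊗ x'`: returns the resulting moved
factor (the paper's `b_j^{(i+1)}`). -/
def passThrough (σ : C.B × C.B ≃ C.B × C.B) (x : C.B) (l : List C.B) : C.B :=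
  l.foldl (fun a y => (σ (a, y)).2) x

/-- The energy function `E_B(b) = Σ_{i<j} H(b_j^{(i+1)} ⊗ b_i)`. -/
def energy (σ : C.B × C.B ≃ C.B × C.B) (H : C.B × C.B → ℤ) : List C.B → ℤ
  | [] => 0
  | x :: l => energy σ H l + ∑ t : Fin l.length, H (passThrough C σ x (l.take t.val), l.get t)

/-- One application of a local isomorphism at some adjacent pair of factors. -/
def locStep (σ : C.B × C.B ≃ C.B × C.B) (l l' : List C.B) : Prop :=
  ∃ (pre suf : List C.B) (x y : C.B),
    l = pre ++ x :: y :: suf ∧ l' = pre ++ (σ (x, y)).1 :: (σ (x, y)).2 :: suf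

namespace EnergyAux

/-! ### String lengths of a single crystal element -/

theorem pIter_none_succ {B : Type*} (g : B → Option B) (n : ℕ) (b : B)
    (h : pIter g n b = none) : pIter g (n + 1) b = none := by
  induction n generalizing b with
  | zero => simp [pIter] at h
  | succ n ih =>
    rw [pIter] at h ⊢
    cases hb : g b with
    | none => rfl
    | some b' =>
      rw [hb] at h
      exact ih b' h

theorem pIter_none_of_le {B : Type*} (g : B → Option B) {n m : ℕ} (hnm : n ≤ m) (b : B)
    (h : pIter g n b = none) : pIter g m b = none := by
  induction hnm with
  | refl => exact h
  | step _ ih => exact pIter_none_succ g _ b ih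

/-- The maximal number of applications of `g` drops by one after applying `g`. -/
theorem length_succ {B : Type*} (g : B → Option B) {n n' : ℕ} {b b' : B} (hb : g b = some b')
    (h : (pIter g n b).isSome ∧ pIter g (n + 1) b = none)
    (h' : (pIter g n' b').isSome ∧ pIter g (n' + 1) b' = none) : n = n' + 1 := by
  have key : ∀ k, pIter g (k + 1) b = pIter g k b' := fun k => by simp [pIter, hb]
  rw [key] at h
  rcases lt_trichotomy n (n' + 1) with hlt | heq | hgt
  · have := pIter_none_of_le g (Nat.lt_succ_iff.mp hlt) b' h.2
    simp [this] at h'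
  · exact heq
  · obtain ⟨k, rfl⟩ : ∃ k, n = k + 1 := ⟨n - 1, by omega⟩
    rw [key] at h
    have := pIter_none_of_le g (show n' + 1 ≤ k by omega) b' h'.2
    simp [this] at h

theorem length_pos {B : Type*} (g : B → Option B) {n : ℕ} {b : B}
    (h : (pIter g n b).isSome ∧ pIter g (n + 1) b = none) : 0 < n ↔ ∃ b', g b = some b' := by
  cases n with
  | zero =>
    have h2 := h.2
    cases hb : g b <;> simp_all [pIter]
  | succ n =>
    have h1 := h.1
    cases hb : g b <;> simp_all [pIter]

variable {I P : Type*} [AddCommGroup P] (C : Crystal I P)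

theorem eps_of_e {i : I} {b b' : C.B} (h : C.e i b = some b') : C.eps i b = C.eps i b' + 1 :=
  length_succ _ h (C.eps_max i b) (C.eps_max i b')

theorem phi_of_e {i : I} {b b' : C.B} (h : C.e i b = some b') : C.phi i b' = C.phi i b + 1 :=
  length_succ _ ((C.ef_inv i b' b).2 h) (C.phi_max i b') (C.phi_max i b)

theorem eps_pos {i : I} {b : C.B} : 0 < C.eps i b ↔ ∃ b', C.e i b = some b' :=
  length_pos _ (C.eps_max i b)

theorem phi_pos {i : I} {b : C.B} : 0 < C.phi i b ↔ ∃ b', C.e i b' = some b := by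
  rw [length_pos _ (C.phi_max i b)]
  simp only [C.ef_inv]

theorem e_ne {i : I} {b b' : C.B} (h : C.e i b = some b') : b' ≠ b := by
  rintro rfl
  have := eps_of_e C h
  omega

/-! ### Pairs and the local isomorphism -/

/-- `ε_i` of `p.1 ⊗ p.2`, equal to `epsList C i [p.1, p.2]`. -/
def pairEps (i : I) (p : C.B × C.B) : ℕ := C.eps i p.2 + (C.eps i p.1 - C.phi i p.2)

/-- `φ_i` of `p.1 ⊗ p.2`, equal to `phiList C i [p.1, p.2]`. -/
def pairPhi (i : I) (p : C.B × C.B) : ℕ := C.phi i p.1 + (C.phi i p.2 - C.eps i p.1)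

theorem ePair_eq_some (i : I) (p q : C.B × C.B) :
    ePair C i p = some q ↔
      (C.eps i p.1 ≤ C.phi i p.2 ∧ q.1 = p.1 ∧ C.e i p.2 = some q.2) ∨
      (C.phi i p.2 < C.eps i p.1 ∧ C.e i p.1 = some q.1 ∧ q.2 = p.2) := by
  obtain ⟨x, y⟩ := p
  obtain ⟨x', y'⟩ := q
  have hy := eps_pos C (i := i) (b := y)
  by_cases h : C.eps i x ≤ C.phi i y
  · have h' : ¬ C.phi i y < C.eps i x := by omega
    by_cases h0 : C.eps i y = 0
    · have hn : C.e i y = none := by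
        cases hc : C.e i y with
        | none => rfl
        | some z =>
          have := hy.2 ⟨z, hc⟩
          omega
      simp [ePair, eList, phiList, h, h', h0, hn]
    · obtain ⟨z, hz⟩ := hy.1 (by omega)
      simp [ePair, eList, phiList, h, h', h0, hz, eq_comm]
  · have h' : C.phi i y < C.eps i x := by omega
    cases hx : C.e i x <;> simp [ePair, eList, phiList, h, h', hx, eq_comm]

theorem pairEps_of_ePair {i : I} {p q : C.B × C.B} (h : ePair C i p = some q) :
    pairEps C i p = pairEps C i q + 1 := by
  rcases (ePair_eq_some C i p q).1 h with ⟨h1, h2, h3⟩ | ⟨h1, h2, h3⟩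
  · have := eps_of_e C h3
    have := phi_of_e C h3
    simp only [pairEps, h2]
    omega
  · have := eps_of_e C h2
    have := phi_of_e C h2
    simp only [pairEps, h3]
    omega

theorem pairPhi_of_ePair {i : I} {p q : C.B × C.B} (h : ePair C i p = some q) :
    pairPhi C i q = pairPhi C i p + 1 := by
  rcases (ePair_eq_some C i p q).1 h with ⟨h1, h2, h3⟩ | ⟨h1, h2, h3⟩
  · have := eps_of_e C h3
    have := phi_of_e C h3
    simp only [pairPhi, h2]
    omega
  · have := eps_of_e C h2
    have := phi_of_e C h2
    simp only [pairPhi, h3]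
    omega

theorem exists_ePair_of_pos {i : I} {p : C.B × C.B} (h : 0 < pairEps C i p) :
    ∃ q, ePair C i p = some q := by
  simp only [pairEps] at h
  by_cases hc : C.eps i p.1 ≤ C.phi i p.2
  · obtain ⟨y, hy⟩ := (eps_pos C (i := i) (b := p.2)).1 (by omega)
    exact ⟨(p.1, y), (ePair_eq_some C i _ _).2 (Or.inl ⟨hc, rfl, hy⟩)⟩
  · obtain ⟨x, hx⟩ := (eps_pos C (i := i) (b := p.1)).1 (by omega)
    exact ⟨(x, p.2), (ePair_eq_some C i _ _).2 (Or.inr ⟨by omega, hx, rfl⟩)⟩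

/-- The tensor product rule for `f_i` on a pair, phrased as the existence of an `e_i`-preimage. -/
theorem exists_ePair_to_of_pos {i : I} {p : C.B × C.B} (h : 0 < pairPhi C i p) :
    ∃ q, ePair C i q = some p := by
  simp only [pairPhi] at h
  by_cases hc : C.eps i p.1 < C.phi i p.2
  · obtain ⟨y, hy⟩ := (phi_pos C (i := i) (b := p.2)).1 (by omega)
    have := phi_of_e C hy
    exact ⟨(p.1, y), (ePair_eq_some C i _ _).2 (Or.inl ⟨by simp only; omega, rfl, hy⟩)⟩
  · obtain ⟨x, hx⟩ := (phi_pos C (i := i) (b := p.1)).1 (by omega)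
    have := eps_of_e C hx
    exact ⟨(x, p.2), (ePair_eq_some C i _ _).2 (Or.inr ⟨by simp only; omega, hx, rfl⟩)⟩

variable (σ : C.B × C.B ≃ C.B × C.B)
  (hσ : ∀ (i : I) (p p' : C.B × C.B),
      ePair C i p = some p' ↔ ePair C i (σ p) = some (σ p'))
include hσ

theorem pairEps_map (i : I) (p : C.B × C.B) : pairEps C i (σ p) = pairEps C i p := by
  induction hn : pairEps C i p generalizing p with
  | zero =>
    by_contra hne
    obtain ⟨q, hq⟩ := exists_ePair_of_pos C (Nat.pos_of_ne_zero hne)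
    rw [← σ.apply_symm_apply q, ← hσ] at hq
    have := pairEps_of_ePair C hq
    omega
  | succ n ih =>
    obtain ⟨q, hq⟩ := exists_ePair_of_pos C (i := i) (p := p) (by omega)
    have h1 := pairEps_of_ePair C hq
    have h2 := pairEps_of_ePair C ((hσ i p q).1 hq)
    have := ih q (by omega)
    omega

theorem pairPhi_map (i : I) (p : C.B × C.B) : pairPhi C i (σ p) = pairPhi C i p := by
  induction hn : pairPhi C i p generalizing p with
  | zero =>
    by_contra hne
    obtain ⟨q, hq⟩ := exists_ePair_to_of_pos C (Nat.pos_of_ne_zero hne)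
    rw [← σ.apply_symm_apply q, ← hσ] at hq
    have := pairPhi_of_ePair C hq
    omega
  | succ n ih =>
    obtain ⟨q, hq⟩ := exists_ePair_to_of_pos C (i := i) (p := p) (by omega)
    have h1 := pairPhi_of_ePair C hq
    have h2 := pairPhi_of_ePair C ((hσ i q p).1 hq)
    have := ih q (by omega)
    omega

omit hσ

/-! ### Tensor products of several factors -/

theorem phiList_cons_cons (i : I) (x y : C.B) (m : List C.B) :
    phiList C i (x :: y :: m) = pairPhi C i (x, y) + (phiList C i m - pairEps C i (x, y)) := by
  simp only [phiList, pairPhi, pairEps]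
  omega

/-- Associativity of the tensor product rule: `e_i` on `(x ⊗ y) ⊗ m`. -/
theorem eList_cons_cons (i : I) (x y : C.B) (m : List C.B) :
    eList C i (x :: y :: m) =
      if pairEps C i (x, y) ≤ phiList C i m then (eList C i m).map (fun m' => x :: y :: m')
      else (ePair C i (x, y)).map (fun q => q.1 :: q.2 :: m) := by
  by_cases h : pairEps C i (x, y) ≤ phiList C i m
  · rw [if_pos h]
    simp only [pairEps] at h
    have h1 : C.eps i y ≤ phiList C i m := by omega
    have h2 : C.eps i x ≤ phiList C i (y :: m) := by
      simp only [phiList]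
      omega
    rw [eList, if_pos h2, eList, if_pos h1, Option.map_map]
    rfl
  · rw [if_neg h]
    obtain ⟨q, hq⟩ := exists_ePair_of_pos C (i := i) (p := (x, y)) (by omega)
    rw [hq]
    simp only [pairEps] at h
    rcases (ePair_eq_some C i _ q).1 hq with ⟨h1, h2, h3⟩ | ⟨h1, h2, h3⟩
    · simp only at h1 h2 h3
      have h4 : C.eps i x ≤ phiList C i (y :: m) := by
        simp only [phiList]
        omega
      have h5 : ¬ C.eps i y ≤ phiList C i m := by omega
      simp [eList, h4, h5, h3, h2]
    · simp only at h1 h2 h3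
      have h4 : ¬ C.eps i x ≤ phiList C i (y :: m) := by
        simp only [phiList]
        omega
      rw [eList, if_neg h4, h2, ← h3]
      rfl

include hσ

theorem phiList_locStep (i : I) {l l' : List C.B} (h : locStep C σ l l') :
    phiList C i l' = phiList C i l := by
  obtain ⟨pre, suf, x, y, rfl, rfl⟩ := h
  induction pre with
  | nil =>
    simp only [List.nil_append, phiList_cons_cons, Prod.mk.eta, pairPhi_map C σ hσ,
      pairEps_map C σ hσ]
  | cons z pre ih => simp only [List.cons_append, phiList, ih]

theorem phiList_reach (i : I) {l l' : List C.B}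
    (h : Relation.ReflTransGen (locStep C σ) l l') : phiList C i l' = phiList C i l := by
  induction h with
  | refl => rfl
  | tail _ h ih => rw [phiList_locStep C σ hσ i h, ih]

/-- How `e_i` on `x ⊗ y ⊗ m` interacts with swapping `x` and `y`: either it acts inside `m`, or it
acts on the pair `x ⊗ y`; in the latter case, after the swap, it acts either on the left factor or
on the moving factor, which is the right one. -/
theorem eList_swap_cases (i : I) {x y : C.B} {m l' : List C.B}
    (h : eList C i (x :: y :: m) = some l') :
    (∃ m', l' = x :: y :: m' ∧ eList C i ((σ (x, y)).2 :: m) = some ((σ (x, y)).2 :: m') ∧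
      eList C i ((σ (x, y)).1 :: (σ (x, y)).2 :: m) =
        some ((σ (x, y)).1 :: (σ (x, y)).2 :: m')) ∨
    (∃ x' y', l' = x' :: y' :: m ∧ ePair C i (x, y) = some (x', y') ∧
      ((x' = x ∧ y' ≠ y) ∨ (x' ≠ x ∧ y' = y)) ∧
      eList C i ((σ (x, y)).1 :: (σ (x, y)).2 :: m) =
        some ((σ (x', y')).1 :: (σ (x', y')).2 :: m) ∧
      (((σ (x', y')).1 = (σ (x, y)).1 ∧ (σ (x', y')).2 ≠ (σ (x, y)).2 ∧
          eList C i ((σ (x, y)).2 :: m) = some ((σ (x', y')).2 :: m)) ∨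
        ((σ (x', y')).1 ≠ (σ (x, y)).1 ∧ (σ (x', y')).2 = (σ (x, y)).2))) := by
  have hE := pairEps_map C σ hσ i (x, y)
  have hc := eList_cons_cons C i (σ (x, y)).1 (σ (x, y)).2 m
  rw [Prod.mk.eta, hE] at hc
  rw [eList_cons_cons] at h
  by_cases hle : pairEps C i (x, y) ≤ phiList C i m
  · left
    rw [if_pos hle] at h hc
    obtain ⟨m', hm, rfl⟩ := Option.map_eq_some_iff.1 h
    refine ⟨m', rfl, ?_, by rw [hc, hm]; rfl⟩
    have h1 : C.eps i (σ (x, y)).2 ≤ phiList C i m := by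
      rw [pairEps] at hE
      omega
    rw [eList, if_pos h1, hm]
    rfl
  · right
    rw [if_neg hle] at h hc
    obtain ⟨⟨x', y'⟩, hp, rfl⟩ := Option.map_eq_some_iff.1 h
    have hq := (hσ i _ _).1 hp
    refine ⟨x', y', rfl, hp, ?_, by rw [hc, hq]; rfl, ?_⟩
    · rcases (ePair_eq_some C i _ _).1 hp with ⟨_, h2, h3⟩ | ⟨_, h2, h3⟩
      · exact Or.inl ⟨h2, e_ne C h3⟩
      · exact Or.inr ⟨e_ne C h2, h3⟩
    · rcases (ePair_eq_some C i _ _).1 hq with ⟨h1, h2, h3⟩ | ⟨_, h2, h3⟩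
      · refine Or.inl ⟨h2, e_ne C h3, ?_⟩
        have h4 : ¬ C.eps i (σ (x, y)).2 ≤ phiList C i m := by
          rw [pairEps] at hE
          omega
        rw [eList, if_neg h4, h3]
        rfl
      · exact Or.inr ⟨e_ne C h2, h3⟩

omit hσ

/-! ### Moving a factor to the right end -/

/-- The image of `x ⊗ m` after moving `x` to the right end by local isomorphisms. -/
def moveRight : C.B → List C.B → List C.B
  | x, [] => [x]
  | x, y :: m => (σ (x, y)).1 :: moveRight (σ (x, y)).2 m

theorem locStep_cons (z : C.B) {l l' : List C.B} (h : locStep C σ l l') :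
    locStep C σ (z :: l) (z :: l') := by
  obtain ⟨pre, suf, x, y, rfl, rfl⟩ := h
  exact ⟨z :: pre, suf, x, y, rfl, rfl⟩

theorem reach_cons (z : C.B) {l l' : List C.B} (h : Relation.ReflTransGen (locStep C σ) l l') :
    Relation.ReflTransGen (locStep C σ) (z :: l) (z :: l') :=
  h.lift (z :: ·) fun _ _ => locStep_cons C σ z

theorem reach_moveRight (x : C.B) (m : List C.B) :
    Relation.ReflTransGen (locStep C σ) (x :: m) (moveRight C σ x m) := by
  induction m generalizing x with
  | nil => exact .refl
  | cons y m ih => exact .head ⟨[], m, x, y, rfl, rfl⟩ (reach_cons C σ _ (ih _))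

theorem getLast?_moveRight (x : C.B) (m : List C.B) :
    (moveRight C σ x m).getLast? = some (passThrough C σ x m) := by
  induction m generalizing x with
  | nil => rfl
  | cons y m ih => simp [moveRight, passThrough, List.getLast?_cons, ih]

include hσ in
theorem eList_moveRight (i : I) {x x' : C.B} {m m' : List C.B}
    (h : eList C i (x :: m) = some (x' :: m')) :
    eList C i (moveRight C σ x m) = some (moveRight C σ x' m') := by
  -- The leftmost factor `z` sees the rest only through `phiList`, which the moves preserve.
  have lift : ∀ (z v : C.B) (s : List C.B),
      eList C i (z :: moveRight C σ v s) =
        if C.eps i z ≤ phiList C i (v :: s) then (eList C i (moveRight C σ v s)).map (z :: ·)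
        else (C.e i z).map (· :: moveRight C σ v s) := fun z v s => by
    rw [eList, phiList_reach C σ hσ i (reach_moveRight C σ v s)]
  induction m generalizing x x' m' with
  | nil =>
    have hm' : m' = [] := by
      rw [eList] at h
      split_ifs at h
      · simp [eList] at h
      · obtain ⟨_, _, h2⟩ := Option.map_eq_some_iff.1 h
        simp only [List.cons.injEq] at h2
        exact h2.2.symm
    subst hm'
    exact h
  | cons y m ih =>
    obtain ⟨y', n', rfl⟩ : ∃ y' n', m' = y' :: n' := by
      rcases eList_swap_cases C σ hσ i h with ⟨n, h1, -⟩ | ⟨a, b, h1, -⟩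
      · exact ⟨_, _, (List.cons.inj h1).2⟩
      · exact ⟨_, _, (List.cons.inj h1).2⟩
    have hs : eList C i ((σ (x, y)).1 :: (σ (x, y)).2 :: m) =
        some ((σ (x', y')).1 :: (σ (x', y')).2 :: n') := by
      rcases eList_swap_cases C σ hσ i h with ⟨n, h1, -, h2⟩ | ⟨a, b, h1, -, -, h2, -⟩
      · simp only [List.cons.injEq] at h1
        obtain ⟨rfl, rfl, rfl⟩ := h1
        exact h2
      · simp only [List.cons.injEq] at h1
        obtain ⟨rfl, rfl, rfl⟩ := h1
        exact h2
    rw [moveRight, moveRight, lift]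
    rw [eList] at hs
    split_ifs at hs ⊢
    · obtain ⟨l, h1, h2⟩ := Option.map_eq_some_iff.1 hs
      simp only [List.cons.injEq] at h2
      obtain ⟨h2, rfl⟩ := h2
      rw [ih h1, h2]
      rfl
    · obtain ⟨l, h1, h2⟩ := Option.map_eq_some_iff.1 hs
      simp only [List.cons.injEq] at h2
      obtain ⟨rfl, h2, rfl⟩ := h2
      rw [h1, h2]
      rfl

/-! ### The change of energy -/

variable (H : C.B × C.B → ℤ)

/-- The part of the energy of `x ⊗ m` collected while `x` moves through `m`. -/
def passSum : C.B → List C.B → ℤ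
  | _, [] => 0
  | x, y :: m => H (x, y) + passSum (σ (x, y)).2 m

theorem energy_cons (x : C.B) (m : List C.B) :
    energy C σ H (x :: m) = energy C σ H m + passSum C σ H x m := by
  rw [energy]
  congr 1
  induction m generalizing x with
  | nil => rfl
  | cons y m ih =>
    rw [passSum, ← ih]
    exact Fin.sum_univ_succ (n := m.length)
      (fun t => H (passThrough C σ x ((y :: m).take t.val), (y :: m).get t))

variable (i0 : I)
  (hH : ∀ (i : I) (p p' : C.B × C.B), ePair C i p = some p' →
      H p' = H p +
        (if i = i0 then
          (if p'.2 = p.2 ∧ (σ p').2 = (σ p).2 then -1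
           else if p'.1 = p.1 ∧ (σ p').1 = (σ p).1 then 1 else 0)
         else 0))
include hσ hH

theorem passSum_of_ne {i : I} (hi : i ≠ i0) {x x' : C.B} {m m' : List C.B}
    (h : eList C i (x :: m) = some (x' :: m')) :
    passSum C σ H x' m' = passSum C σ H x m := by
  induction m generalizing x x' m' with
  | nil =>
    cases m' with
    | nil => rfl
    | cons _ _ =>
      rw [eList] at h
      split_ifs at h
      · simp [eList] at h
      · simp at h
  | cons y m ih =>
    rcases eList_swap_cases C σ hσ i h with ⟨n, h1, h2, -⟩ | ⟨a, b, h1, hp, -, -, h3⟩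
    · simp only [List.cons.injEq] at h1
      obtain ⟨rfl, rfl⟩ := h1
      rw [passSum, passSum, ih h2]
    · simp only [List.cons.injEq] at h1
      obtain ⟨rfl, rfl⟩ := h1
      have hh := hH i _ _ hp
      rw [if_neg hi] at hh
      rw [passSum, passSum, hh]
      rcases h3 with ⟨-, -, h3⟩ | ⟨-, h3⟩
      · rw [ih h3, add_zero]
      · rw [h3, add_zero]

/-- If `e_0` does not act on the moving factor once it has reached the right end, then the terms
collected by moving `x` through `m` change by `-1` when `e_0` acts on `x`, and by `0` in total when
it acts inside `m`. -/
theorem passSum_zero {x x' : C.B} {m m' : List C.B}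
    (h : eList C i0 (x :: m) = some (x' :: m'))
    (hlast : passThrough C σ x' m' = passThrough C σ x m) :
    passSum C σ H x' m' = passSum C σ H x m + (if x' = x then 0 else -1) := by
  induction m generalizing x x' m' with
  | nil =>
    cases m' with
    | nil =>
      have : x' = x := hlast
      simp [this, passSum]
    | cons _ _ =>
      rw [eList] at h
      split_ifs at h
      · simp [eList] at h
      · simp at h
  | cons y m ih =>
    rcases eList_swap_cases C σ hσ i0 h with ⟨n, h1, h2, -⟩ | ⟨a, b, h1, hp, hxy, -, h3⟩
    · simp only [List.cons.injEq] at h1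
      obtain ⟨rfl, rfl⟩ := h1
      have := ih h2 hlast
      simp only [if_true] at this
      simp [passSum, this]
    · simp only [List.cons.injEq] at h1
      obtain ⟨rfl, rfl⟩ := h1
      have hh := hH i0 _ _ hp
      rw [passSum, passSum, hh]
      rcases h3 with ⟨hu, hv, h3⟩ | ⟨hu, hv⟩
      · rw [ih h3 hlast]
        rcases hxy with ⟨rfl, hy⟩ | ⟨hx, rfl⟩
        · simp [hu, hv, hy]
          ring
        · simp [hv, hx]
          ring
      · rcases hxy with ⟨rfl, hy⟩ | ⟨hx, rfl⟩
        · simp [hu, hv, hy]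
        · simp [hv, hx]
          ring

omit hσ hH in
/-- `e_i` acts either on the leftmost factor or on the remaining ones. -/
theorem eList_cons_cases (i : I) {x : C.B} {m l' : List C.B}
    (h : eList C i (x :: m) = some l') :
    (∃ m', l' = x :: m' ∧ C.eps i x ≤ phiList C i m ∧ eList C i m = some m') ∨
    (∃ x', l' = x' :: m ∧ x' ≠ x) := by
  rw [eList] at h
  split_ifs at h with hc
  · obtain ⟨m', h1, rfl⟩ := Option.map_eq_some_iff.1 h
    exact Or.inl ⟨m', rfl, hc, h1⟩
  · obtain ⟨x', h1, rfl⟩ := Option.map_eq_some_iff.1 h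
    exact Or.inr ⟨x', rfl, e_ne C h1⟩

theorem energy_of_ne {i : I} (hi : i ≠ i0) {l l' : List C.B}
    (h : eList C i l = some l') : energy C σ H l' = energy C σ H l := by
  induction l generalizing l' with
  | nil => simp [eList] at h
  | cons x m ih =>
    rcases eList_cons_cases C i h with ⟨m', rfl, -, h2⟩ | ⟨x', rfl, -⟩
    · rw [energy_cons, energy_cons, ih h2, passSum_of_ne C σ hσ H i0 hH hi h]
    · rw [energy_cons, energy_cons, passSum_of_ne C σ hσ H i0 hH hi h]

omit hσ hH in
theorem eList_ne_nil (i : I) {l l' : List C.B} (h : eList C i l = some l') :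
    l ≠ [] ∧ l' ≠ [] := by
  cases l with
  | nil => simp [eList] at h
  | cons x m =>
    rcases eList_cons_cases C i h with ⟨m', rfl, -⟩ | ⟨x', rfl, -⟩ <;> simp

theorem energy_zero {l l' : List C.B}
    (hl : ∀ l₁, Relation.ReflTransGen (locStep C σ) l l₁ →
      ∀ l₂, eList C i0 l₁ = some l₂ → l₂.getLast? = l₁.getLast?)
    (h : eList C i0 l = some l') : energy C σ H l' = energy C σ H l - 1 := by
  induction l generalizing l' with
  | nil => simp [eList] at h
  | cons x m ih =>
    have hlast : ∀ {x' m'}, eList C i0 (x :: m) = some (x' :: m') →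
        passThrough C σ x' m' = passThrough C σ x m := fun h => by
      have := hl _ (reach_moveRight C σ x m) _ (eList_moveRight C σ hσ i0 h)
      rwa [getLast?_moveRight, getLast?_moveRight, Option.some_inj] at this
    rcases eList_cons_cases C i0 h with ⟨m', rfl, hc, h2⟩ | ⟨x', rfl, hne⟩
    · have hm := ih (fun l₁ hr l₂ he => by
        have he' : eList C i0 (x :: l₁) = some (x :: l₂) := by
          rw [eList, phiList_reach C σ hσ i0 hr, if_pos hc, he]
          rfl
        have := hl _ (reach_cons C σ x hr) _ he'
        obtain ⟨n1, n2⟩ := eList_ne_nil C i0 he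
        rwa [List.getLast?_cons_of_ne_nil n2, List.getLast?_cons_of_ne_nil n1] at this) h2
      rw [energy_cons, energy_cons, hm, passSum_zero C σ hσ H i0 hH h (hlast h), if_pos rfl]
      ring
    · rw [energy_cons, energy_cons, passSum_zero C σ hσ H i0 hH h (hlast h), if_neg hne]
      ring

end EnergyAux

/-- the energy is constant along `e_i` for `i ≠ 0` and drops by one
along `e₀` provided `e₀` never acts on the rightmost (first) tensor factor of any
image of `b` under compositions of local isomorphisms.  Here `i0` plays the role
of the color `0`, `σ` is the local isomorphism (an isomorphism of crystals,
hypothesis `hσ`), and `H` the local energy function with its defining property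
`hH`: under `e_i`, `H` changes by `-1` if `i = 0` acts on the left factor on both
sides of the local isomorphism, `+1` if on the right factor on both sides, and
`0` otherwise. -/
theorem energy_under_e
    {I P : Type*} [AddCommGroup P] (C : Crystal I P) (i0 : I)
    (σ : C.B × C.B ≃ C.B × C.B)
    (hσ : ∀ (i : I) (p p' : C.B × C.B),
      ePair C i p = some p' ↔ ePair C i (σ p) = some (σ p'))
    (H : C.B × C.B → ℤ)
    (hH : ∀ (i : I) (p p' : C.B × C.B), ePair C i p = some p' →
      H p' = H p +
        (if i = i0 then
          (if p'.2 = p.2 ∧ (σ p').2 = (σ p).2 then -1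
           else if p'.1 = p.1 ∧ (σ p').1 = (σ p).1 then 1 else 0)
         else 0)) :
    (∀ (i : I), i ≠ i0 → ∀ (l l' : List C.B), eList C i l = some l' →
        energy C σ H l' = energy C σ H l)
    ∧ (∀ l : List C.B,
        (∀ l₁, Relation.ReflTransGen (locStep C σ) l l₁ →
          ∀ l₂, eList C i0 l₁ = some l₂ → l₂.getLast? = l₁.getLast?) →
        ∀ l', eList C i0 l = some l' →
          energy C σ H l' = energy C σ H l - 1) := by
  exact ⟨fun i hi _ _ h => EnergyAux.energy_of_ne C σ hσ H i0 hH hi h,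
    fun _ hl _ h => EnergyAux.energy_zero C σ hσ H i0 hH hl h⟩

end Energy
end
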